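/- arXiv:2507.02540 — 2 statements merged into one kernel-verified Lean document; each statement's English description precedes it below -/
import Mathlib

section
/- Tracing out one copy of the channel output reproduces the channel on one fewer copy: for every natural number n, every natural number α' ≥ 1 and α = α' + 1, and every unit vector ψ : (Fin n → Fin 2) → ℂ, the matrix τ indexed by (Fin α' → Fin n → Fin 2) with entries τ g g' = Σ over all b : Fin n → Fin 2 of ρ_α (Fin.cons b g) (Fin.cons b g') equals ρ_{α'}. -/
open Complex Matrix BigOperators

/-- The single-qubit Pauli matrices `Q₀ = 1`, `Q₁ = X`, `Q₂ = Y`, `Q₃ = Z`. -/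
noncomputable def Q : Fin 4 → Matrix (Fin 2) (Fin 2) ℂ :=
  ![1, !![0, 1; 1, 0], !![0, -Complex.I; Complex.I, 0], !![1, 0; 0, -1]]

/-- The `n`-qubit Pauli string `P_s`, the Kronecker product of the `Q (s k)`. -/
noncomputable def P {n : ℕ} (s : Fin n → Fin 4) :
    Matrix (Fin n → Fin 2) (Fin n → Fin 2) ℂ :=
  Matrix.of fun i j => ∏ k, Q (s k) (i k) (j k)


/-- The channel output `E_P^α(|ψ⟩⟨ψ|^⊗α)`: each Pauli string applied with probability `d⁻²`
simultaneously to all `α` copies of `ψ`. -/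
noncomputable def rho (n α : ℕ) (ψ : (Fin n → Fin 2) → ℂ) :
    Matrix (Fin α → Fin n → Fin 2) (Fin α → Fin n → Fin 2) ℂ :=
  Matrix.of fun f g => ((2 ^ n : ℂ) ^ 2)⁻¹ *
    ∑ s : Fin n → Fin 4, ∏ m, ((P s).mulVec ψ (f m) * (starRingEnd ℂ) ((P s).mulVec ψ (g m)))

/-!
Tracing out one factor of `|φ⟩⟨φ|^⊗(α + 1)` leaves `|φ⟩⟨φ|^⊗α` scaled by `⟨φ|φ⟩`. Pauli strings are
unitary, so every `φ = P_s ψ` gives the same factor `⟨ψ|ψ⟩`, which comes out of the average over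
`s`.
-/

section PiKronecker

variable {ι R : Type*} [Fintype ι]

/-- The Kronecker product `⨂ k, A k` of a finite family of matrices, whose rows and columns are
indexed by dependent functions. -/
def piKronecker [CommMonoid R] {l m : ι → Type*} (A : ∀ k, Matrix (l k) (m k) R) :
    Matrix (∀ k, l k) (∀ k, m k) R :=
  Matrix.of fun i j => ∏ k, A k (i k) (j k)

theorem piKronecker_mul_piKronecker [DecidableEq ι] [CommSemiring R] {l m o : ι → Type*}
    [∀ k, Fintype (m k)] (A : ∀ k, Matrix (l k) (m k) R) (B : ∀ k, Matrix (m k) (o k) R) :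
    piKronecker A * piKronecker B = piKronecker fun k => A k * B k := by
  ext i j
  simp only [piKronecker, mul_apply, of_apply, ← Finset.prod_mul_distrib, Fintype.prod_sum]

theorem piKronecker_one [CommMonoidWithZero R] {m : ι → Type*} [∀ k, DecidableEq (m k)] :
    piKronecker (fun k => (1 : Matrix (m k) (m k) R)) = 1 := by
  ext i j
  simp [piKronecker, one_apply, Finset.prod_ite_zero, funext_iff]

theorem conjTranspose_piKronecker [CommMonoid R] [StarMul R] {l m : ι → Type*}
    (A : ∀ k, Matrix (l k) (m k) R) : (piKronecker A)ᴴ = piKronecker fun k => (A k)ᴴ := by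
  ext i j
  simp [piKronecker]

theorem conjTranspose_piKronecker_mul_self_eq_one [DecidableEq ι] [CommSemiring R] [StarMul R]
    {l m : ι → Type*} [∀ k, Fintype (l k)] [∀ k, DecidableEq (m k)]
    {A : ∀ k, Matrix (l k) (m k) R} (hA : ∀ k, (A k)ᴴ * A k = 1) :
    (piKronecker A)ᴴ * piKronecker A = 1 := by
  simp only [conjTranspose_piKronecker, piKronecker_mul_piKronecker, hA, piKronecker_one]

end PiKronecker

section PartialTrace

variable {α : ℕ} {R : Type*} [CommSemiring R] {m : Fin (α + 1) → Type*} [Fintype (m 0)]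

/-- The partial trace over the first of `α + 1` tensor factors, as a linear map. -/
def partialTraceHead :
    Matrix (∀ k, m k) (∀ k, m k) R →ₗ[R]
      Matrix (∀ k : Fin α, m k.succ) (∀ k : Fin α, m k.succ) R where
  toFun M := Matrix.of fun f g => ∑ b, M (Fin.cons b f) (Fin.cons b g)
  map_add' M N := by
    ext f g
    simp [Finset.sum_add_distrib]
  map_smul' c M := by
    ext f g
    simp [Finset.mul_sum]

theorem partialTraceHead_piKronecker (A : ∀ k, Matrix (m k) (m k) R) :
    partialTraceHead (piKronecker A) = (A 0).trace • piKronecker fun k : Fin α => A k.succ := by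
  ext f g
  simp [partialTraceHead, piKronecker, Fin.prod_univ_succ, ← Finset.sum_mul, trace]

end PartialTrace

section PureStatePow

variable {m R : Type*} [CommSemiring R] [Star R]

/-- The tensor power `|φ⟩⟨φ|^⊗α` of the (possibly unnormalized) pure state `|φ⟩⟨φ|`. -/
def pureStatePow (α : ℕ) (φ : m → R) : Matrix (Fin α → m) (Fin α → m) R :=
  piKronecker fun _ : Fin α => vecMulVec φ (star φ)

theorem partialTraceHead_pureStatePow [Fintype m] (α : ℕ) (φ : m → R) :
    partialTraceHead (pureStatePow (α + 1) φ) = (star φ ⬝ᵥ φ) • pureStatePow α φ := by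
  rw [pureStatePow, partialTraceHead_piKronecker, trace_vecMulVec, dotProduct_comm, pureStatePow]

end PureStatePow

theorem star_mulVec_dotProduct_mulVec {l m R : Type*} [Fintype l] [Fintype m] [DecidableEq m]
    [Semiring R] [StarRing R] {A : Matrix l m R} (hA : Aᴴ * A = 1) (v w : m → R) :
    star (A *ᵥ v) ⬝ᵥ (A *ᵥ w) = star v ⬝ᵥ w := by
  rw [star_mulVec, ← dotProduct_mulVec, mulVec_mulVec, hA, one_mulVec]

theorem conjTranspose_Q_mul_self (a : Fin 4) : (Q a)ᴴ * Q a = 1 := by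
  ext i j
  fin_cases a <;> fin_cases i <;> fin_cases j <;> simp [Q, mul_apply]

theorem P_eq_piKronecker {n : ℕ} (s : Fin n → Fin 4) : P s = piKronecker fun k => Q (s k) :=
  rfl

theorem conjTranspose_P_mul_self {n : ℕ} (s : Fin n → Fin 4) : (P s)ᴴ * P s = 1 := by
  rw [P_eq_piKronecker]
  exact conjTranspose_piKronecker_mul_self_eq_one fun k => conjTranspose_Q_mul_self (s k)

theorem rho_eq_smul_sum_pureStatePow (n α : ℕ) (ψ : (Fin n → Fin 2) → ℂ) :
    rho n α ψ = ((2 ^ n : ℂ) ^ 2)⁻¹ • ∑ s : Fin n → Fin 4, pureStatePow α (P s *ᵥ ψ) := by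
  ext f g
  simp [rho, pureStatePow, piKronecker, vecMulVec_apply, Matrix.sum_apply]

theorem trace_out_one_copy_general (n α : ℕ) (ψ : (Fin n → Fin 2) → ℂ) :
    partialTraceHead (rho n (α + 1) ψ) = (star ψ ⬝ᵥ ψ) • rho n α ψ := by
  have partialTraceHead_term (s : Fin n → Fin 4) :
      partialTraceHead (pureStatePow (α + 1) (P s *ᵥ ψ)) =
        (star ψ ⬝ᵥ ψ) • pureStatePow α (P s *ᵥ ψ) := by
    rw [partialTraceHead_pureStatePow,
      star_mulVec_dotProduct_mulVec (conjTranspose_P_mul_self s)]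
  simp_rw [rho_eq_smul_sum_pureStatePow, map_smul, map_sum, partialTraceHead_term,
    ← Finset.smul_sum]
  rw [smul_comm]

theorem trace_out_one_copy (n α' : ℕ) (hα' : 1 ≤ α') (ψ : (Fin n → Fin 2) → ℂ)
    (hψ : star ψ ⬝ᵥ ψ = 1) :
    (Matrix.of fun g g' : Fin α' → Fin n → Fin 2 =>
        ∑ b : Fin n → Fin 2,
          rho n (α' + 1) ψ (Fin.cons b g) (Fin.cons b g'))
      = rho n α' ψ :=
  (trace_out_one_copy_general n α' ψ).trans (by rw [hψ, one_smul])
end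

section
/- Replica (multi-copy observable) expression for the stabilizer Rényi quantity: for every natural number n, every integer α ≥ 1, and every unit vector ψ : (Fin n → Fin 2) → ℂ, letting Ψ : (Fin (2*α) → Fin n → Fin 2) → ℂ be the 2α-fold tensor power Ψ f = ∏_{m : Fin (2*α)} ψ (f m), one has Re( d⁻¹ · Σ over all s : Fin n → Fin 4 of ⟨Ψ, P_s^{⊗2α} Ψ⟩ ) = A_α(ψ), where P_s^{⊗2α} is the matrix indexed by (Fin (2*α) → Fin n → Fin 2) with entries P_s^{⊗2α} f g = ∏_{m : Fin (2*α)} P_s (f m) (g m), ⟨Ψ, M Ψ⟩ = star Ψ ⬝ᵥ M.mulVec Ψ, and d = 2^n. -/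
open Complex Matrix BigOperators

/-- `A_α(ψ) = d⁻¹ ∑_s ⟨ψ, P_s ψ⟩^(2α)` with `d = 2^n`. -/
noncomputable def A (n α : ℕ) (ψ : (Fin n → Fin 2) → ℂ) : ℝ :=
  (2 ^ n : ℝ)⁻¹ * ∑ s : Fin n → Fin 4, (star ψ ⬝ᵥ (P s).mulVec ψ).re ^ (2 * α)

/-!
Matrix elements of tensor products factor over the tensor legs, so `⟨ψ^⊗N, M^⊗N ψ^⊗N⟩` is
`⟨ψ, M ψ⟩ ^ N` for every matrix `M`. Pauli strings are Hermitian, being tensor products of Hermitian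
matrices; hence `⟨ψ, P_s ψ⟩` is real, and taking real parts commutes with the `N`-th power.
-/

section TensorProduct

variable {κ R : Type*} {ι ι' : κ → Type*} [Fintype κ] [CommSemiring R]

/-- The tensor product `⨂ₖ vₖ` of a finite family of vectors, with coordinates indexed by dependent
functions. -/
def tensorVector (v : ∀ k, ι k → R) : (∀ k, ι k) → R :=
  fun f => ∏ k, v k (f k)

/-- The tensor (Kronecker) product `⨂ₖ Mₖ` of a finite family of matrices, with rows and columns
indexed by dependent functions. For square matrices on `Fin 2` it is the operator on a register of
qubits acting by `Mₖ` on the `k`-th one; for a constant family it is a tensor power. -/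
def tensorMatrix (M : ∀ k, Matrix (ι k) (ι' k) R) : Matrix (∀ k, ι k) (∀ k, ι' k) R :=
  Matrix.of fun f g => ∏ k, M k (f k) (g k)

lemma star_tensorVector [StarRing R] (v : ∀ k, ι k → R) :
    star (tensorVector v) = tensorVector fun k => star (v k) :=
  funext fun _ => star_prod _ _

lemma conjTranspose_tensorMatrix [StarRing R] (M : ∀ k, Matrix (ι k) (ι' k) R) :
    (tensorMatrix M)ᴴ = tensorMatrix fun k => (M k)ᴴ :=
  Matrix.ext fun _ _ => star_prod _ _

lemma isHermitian_tensorMatrix [StarRing R] {M : ∀ k, Matrix (ι k) (ι k) R}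
    (hM : ∀ k, (M k).IsHermitian) : (tensorMatrix M).IsHermitian :=
  (conjTranspose_tensorMatrix M).trans (congrArg tensorMatrix (funext fun k => (hM k).eq))

variable [DecidableEq κ]

lemma tensorVector_dotProduct_tensorVector [∀ k, Fintype (ι k)] (v w : ∀ k, ι k → R) :
    tensorVector v ⬝ᵥ tensorVector w = ∏ k, v k ⬝ᵥ w k := by
  simp only [dotProduct, tensorVector, Fintype.prod_sum, Finset.prod_mul_distrib]

lemma tensorMatrix_mulVec_tensorVector [∀ k, Fintype (ι' k)]
    (M : ∀ k, Matrix (ι k) (ι' k) R) (v : ∀ k, ι' k → R) :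
    tensorMatrix M *ᵥ tensorVector v = tensorVector fun k => M k *ᵥ v k :=
  funext fun f => tensorVector_dotProduct_tensorVector (fun k => M k (f k)) v

lemma star_tensorVector_dotProduct_tensorMatrix_mulVec [StarRing R] [∀ k, Fintype (ι k)]
    [∀ k, Fintype (ι' k)] (M : ∀ k, Matrix (ι k) (ι' k) R) (v : ∀ k, ι k → R)
    (w : ∀ k, ι' k → R) :
    star (tensorVector v) ⬝ᵥ tensorMatrix M *ᵥ tensorVector w
      = ∏ k, star (v k) ⬝ᵥ M k *ᵥ w k := by
  rw [tensorMatrix_mulVec_tensorVector, star_tensorVector, tensorVector_dotProduct_tensorVector]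

end TensorProduct

lemma isHermitian_Q (a : Fin 4) : (Q a).IsHermitian := by
  ext i j
  fin_cases a <;> fin_cases i <;> fin_cases j <;> simp [Q]

lemma isHermitian_P {n : ℕ} (s : Fin n → Fin 4) : (P s).IsHermitian :=
  isHermitian_tensorMatrix fun k => isHermitian_Q (s k)

lemma ofReal_re_star_dotProduct_mulVec_self {𝕜 ι : Type*} [RCLike 𝕜] [Fintype ι]
    {M : Matrix ι ι 𝕜} (hM : M.IsHermitian) (v : ι → 𝕜) :
    (RCLike.re (star v ⬝ᵥ M *ᵥ v) : 𝕜) = star v ⬝ᵥ M *ᵥ v :=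
  RCLike.conj_eq_iff_re.mp (RCLike.conj_eq_iff_im.mpr (hM.im_star_dotProduct_mulVec_self v))

lemma star_tensorVector_const_dotProduct_mulVec_of_isHermitian {𝕜 κ ι : Type*} [RCLike 𝕜]
    [Fintype κ] [DecidableEq κ] [Fintype ι] {M : Matrix ι ι 𝕜} (hM : M.IsHermitian) (v : ι → 𝕜) :
    star (tensorVector fun _ : κ => v) ⬝ᵥ
        tensorMatrix (fun _ : κ => M) *ᵥ tensorVector (fun _ : κ => v)
      = ((RCLike.re (star v ⬝ᵥ M *ᵥ v) ^ Fintype.card κ : ℝ) : 𝕜) := by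
  rw [star_tensorVector_dotProduct_tensorMatrix_mulVec, Finset.prod_const, Finset.card_univ,
    RCLike.ofReal_pow, ofReal_re_star_dotProduct_mulVec_self hM]

theorem replica_expression_general (n N : ℕ) (ψ : (Fin n → Fin 2) → ℂ) :
    (2 ^ n : ℂ)⁻¹ * ∑ s : Fin n → Fin 4,
        star (tensorVector fun _ : Fin N => ψ) ⬝ᵥ
          tensorMatrix (fun _ : Fin N => P s) *ᵥ tensorVector (fun _ : Fin N => ψ)
      = (((2 ^ n : ℝ)⁻¹ * ∑ s : Fin n → Fin 4, (star ψ ⬝ᵥ P s *ᵥ ψ).re ^ N : ℝ) : ℂ) := by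
  have replicas_eq_pow (s : Fin n → Fin 4) :
      star (tensorVector fun _ : Fin N => ψ) ⬝ᵥ
          tensorMatrix (fun _ : Fin N => P s) *ᵥ tensorVector (fun _ : Fin N => ψ)
        = (((star ψ ⬝ᵥ P s *ᵥ ψ).re ^ N : ℝ) : ℂ) := by
    rw [star_tensorVector_const_dotProduct_mulVec_of_isHermitian (isHermitian_P s),
      Fintype.card_fin]
    rfl
  simp only [replicas_eq_pow, Complex.ofReal_mul, Complex.ofReal_inv, Complex.ofReal_pow,
    Complex.ofReal_ofNat, Complex.ofReal_sum]

theorem replica_expression (n α : ℕ) (hα : 1 ≤ α) (ψ : (Fin n → Fin 2) → ℂ)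
    (hψ : star ψ ⬝ᵥ ψ = 1) :
    ((2 ^ n : ℂ)⁻¹ * ∑ s : Fin n → Fin 4,
        (star fun f : Fin (2 * α) → Fin n → Fin 2 => ∏ m, ψ (f m)) ⬝ᵥ
          (Matrix.of fun f g : Fin (2 * α) → Fin n → Fin 2 =>
            ∏ m, P s (f m) (g m)).mulVec
          (fun f => ∏ m, ψ (f m))).re
      = A n α ψ := by
  exact congrArg Complex.re (replica_expression_general n (2 * α) ψ)
end
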